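/- Let X be a random vector in ℝ^d with bounded support, and for a positive semidefinite d×d matrix λ define the observation Y = λ^{1/2} X + W with W ~ N(0, I_d) independent of X. Then the MMSE matrix M(λ) = E[cov(X | Y)] is monotone nonincreasing in λ with respect to the Loewner order: if λ₁ ⪯ λ₂ then M(λ₂) ⪯ M(λ₁). -/

import Mathlib

open Matrix MeasureTheory ProbabilityTheory

section MatrixContraction

variable {n : Type*} [Fintype n]

lemma Matrix.dotProduct_mulVec_eq_transpose_mulVec_dotProduct (A : Matrix n n ℝ) (x y : n → ℝ) :
    x ⬝ᵥ (A *ᵥ y) = (Aᵀ *ᵥ x) ⬝ᵥ y := by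
  rw [dotProduct_mulVec, mulVec_transpose]

lemma Matrix.dotProduct_mulVec_transpose_le {K : Matrix n n ℝ}
    (hK : ∀ x, (K *ᵥ x) ⬝ᵥ (K *ᵥ x) ≤ x ⬝ᵥ x) (x : n → ℝ) :
    (Kᵀ *ᵥ x) ⬝ᵥ (Kᵀ *ᵥ x) ≤ x ⬝ᵥ x := by
  have h0 : 0 ≤ (x - K *ᵥ (Kᵀ *ᵥ x)) ⬝ᵥ (x - K *ᵥ (Kᵀ *ᵥ x)) :=
    Finset.sum_nonneg fun i _ => mul_self_nonneg _
  have h1 := hK (Kᵀ *ᵥ x)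
  have h2 := dotProduct_mulVec_eq_transpose_mulVec_dotProduct K x (Kᵀ *ᵥ x)
  rw [sub_dotProduct, dotProduct_sub, dotProduct_sub,
    dotProduct_comm (K *ᵥ (Kᵀ *ᵥ x)) x] at h0
  linarith

variable [DecidableEq n]

/-- A Hermitian real matrix has a symmetric commuting generalized inverse. -/
lemma Matrix.IsHermitian.exists_commuting_pseudoinverse {S : Matrix n n ℝ} (hS : S.IsHermitian) :
    ∃ T : Matrix n n ℝ, Tᵀ = T ∧ S * T = T * S ∧ S * T * S = S := by
  obtain ⟨U, e, hUU, hSU⟩ : ∃ (U : Matrix n n ℝ) (e : n → ℝ), star U * U = 1 ∧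
      S = U * (diagonal e * star U) := by
    refine ⟨hS.eigenvectorUnitary, hS.eigenvalues, by simp, ?_⟩
    conv_lhs => rw [hS.spectral_theorem]
    simp [Unitary.conjStarAlgAut_apply, mul_assoc]
  have hUU' (A : Matrix n n ℝ) : star U * (U * A) = A := by
    rw [← mul_assoc, hUU, one_mul]
  refine ⟨U * (diagonal (fun i => (e i)⁻¹) * star U), ?_, ?_, ?_⟩
  · simp [star_eq_conjTranspose, conjTranspose_eq_transpose_of_trivial, mul_assoc]
  · conv_lhs => rw [hSU]
    conv_rhs => rw [hSU]
    simp only [mul_assoc, hUU']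
    congr 1
    simp only [← mul_assoc, diagonal_mul_diagonal, mul_comm]
  · conv_lhs => rw [hSU]
    conv_rhs => rw [hSU]
    simp only [mul_assoc, hUU']
    congr 1
    simp only [← mul_assoc, diagonal_mul_diagonal]
    congr 2
    ext i
    by_cases h : e i = 0 <;> simp [h]

/-- Douglas factorization: if `s₁² ⪯ s₂²` then `s₁ = K s₂` for a contraction `K`, whose defect
`1 - K Kᵀ` is written as `L Lᵀ`. -/
lemma Matrix.exists_contraction_mul_eq {s₁ s₂ : Matrix n n ℝ} (hs₁ : s₁.IsHermitian)
    (hs₂ : s₂.IsHermitian) (hle : (s₂ * s₂ - s₁ * s₁).PosSemidef) :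
    ∃ K L : Matrix n n ℝ, K * s₂ = s₁ ∧ K * Kᵀ + L * Lᵀ = 1 := by
  have t₁ : s₁ᵀ = s₁ := by simpa [conjTranspose_eq_transpose_of_trivial] using hs₁.eq
  have t₂ : s₂ᵀ = s₂ := by simpa [conjTranspose_eq_transpose_of_trivial] using hs₂.eq
  have hnorm (x : n → ℝ) : (s₁ *ᵥ x) ⬝ᵥ (s₁ *ᵥ x) ≤ (s₂ *ᵥ x) ⬝ᵥ (s₂ *ᵥ x) := by
    have h := hle.dotProduct_mulVec_nonneg x
    rw [star_trivial, sub_mulVec, dotProduct_sub, ← mulVec_mulVec, ← mulVec_mulVec,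
      dotProduct_mulVec_eq_transpose_mulVec_dotProduct, dotProduct_mulVec_eq_transpose_mulVec_dotProduct s₁, t₁, t₂] at h
    linarith
  obtain ⟨T, hT, hcomm, hST⟩ := hs₂.exists_commuting_pseudoinverse
  have hsP : s₁ * (T * s₂) = s₁ := by
    refine Matrix.ext_of_mulVec_single fun i => ?_
    set x : n → ℝ := Pi.single i 1
    have h := hnorm (x - (T * s₂) *ᵥ x)
    have h2 : s₂ *ᵥ (x - (T * s₂) *ᵥ x) = 0 := by
      rw [mulVec_sub, mulVec_mulVec, ← mul_assoc, hST, sub_self]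
    rw [h2, zero_dotProduct] at h
    have h3 : s₁ *ᵥ (x - (T * s₂) *ᵥ x) = 0 :=
      dotProduct_self_eq_zero.1
        (le_antisymm h (Finset.sum_nonneg fun i _ => mul_self_nonneg _))
    rw [mulVec_sub, mulVec_mulVec, sub_eq_zero] at h3
    exact h3.symm
  have hP (x : n → ℝ) : ((s₂ * T) *ᵥ x) ⬝ᵥ ((s₂ * T) *ᵥ x) ≤ x ⬝ᵥ x := by
    have h0 : 0 ≤ (x - (s₂ * T) *ᵥ x) ⬝ᵥ (x - (s₂ * T) *ᵥ x) :=
      Finset.sum_nonneg fun i _ => mul_self_nonneg _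
    have h1 : x ⬝ᵥ ((s₂ * T) *ᵥ x) = ((s₂ * T) *ᵥ x) ⬝ᵥ ((s₂ * T) *ᵥ x) := by
      have hPP : (s₂ * T) * (s₂ * T) = s₂ * T := by rw [← mul_assoc, hST]
      have hPt : (s₂ * T)ᵀ = s₂ * T := by rw [transpose_mul, hT, t₂, hcomm]
      conv_lhs => rw [← hPP, ← mulVec_mulVec, dotProduct_mulVec_eq_transpose_mulVec_dotProduct, hPt]
    rw [sub_dotProduct, dotProduct_sub, dotProduct_sub,
      dotProduct_comm ((s₂ * T) *ᵥ x) x] at h0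
    linarith
  have hK (x : n → ℝ) : ((s₁ * T) *ᵥ x) ⬝ᵥ ((s₁ * T) *ᵥ x) ≤ x ⬝ᵥ x := by
    refine le_trans ?_ (hP x)
    simpa only [mulVec_mulVec] using hnorm (T *ᵥ x)
  have hdef : (1 - (s₁ * T) * (s₁ * T)ᵀ).PosSemidef := by
    refine .of_dotProduct_mulVec_nonneg ?_ fun x => ?_
    · simp [IsHermitian, conjTranspose_eq_transpose_of_trivial]
    · have h := dotProduct_mulVec_transpose_le hK x
      rw [star_trivial, sub_mulVec, dotProduct_sub, one_mulVec, ← mulVec_mulVec,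
        dotProduct_mulVec_eq_transpose_mulVec_dotProduct]
      linarith
  obtain ⟨B, hB⟩ : ∃ B : Matrix n n ℝ, 1 - (s₁ * T) * (s₁ * T)ᵀ = Bᴴ * B := by
    open scoped MatrixOrder in
    exact CStarAlgebra.nonneg_iff_eq_star_mul_self.1 hdef.nonneg
  refine ⟨s₁ * T, Bᵀ, by rw [mul_assoc, hsP], ?_⟩
  rw [transpose_transpose, ← conjTranspose_eq_transpose_of_trivial B, ← hB]
  abel

end MatrixContraction

section GaussianMixing

variable {ι : Type*} [Fintype ι] [DecidableEq ι]

lemma charFunDual_pi_gaussianReal (l : StrongDual ℝ (ι → ℝ)) :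
    charFunDual (Measure.pi fun _ : ι => gaussianReal 0 1) l
      = Complex.exp (-((∑ i, l (Pi.single i 1) ^ 2 : ℝ) : ℂ) / 2) := by
  rw [charFunDual_pi]
  have h (i : ι) : charFunDual (gaussianReal 0 1) (l.comp (.single ℝ (fun _ => ℝ) i))
      = Complex.exp (-((l (Pi.single i 1) ^ 2 : ℝ) : ℂ) / 2) := by
    have hl : l.comp (.single ℝ (fun _ => ℝ) i)
        = InnerProductSpace.toDualMap ℝ ℝ (l (Pi.single i 1)) := by
      ext; simp
    rw [hl, ← charFun_eq_charFunDual_toDualMap, charFun_gaussianReal]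
    congr 1
    push_cast
    ring_nf
  simp_rw [h]
  rw [← Complex.exp_sum, ← Finset.sum_div, Finset.sum_neg_distrib]
  push_cast
  rfl

/-- The standard Gaussian law is preserved by mixing two independent copies with `K Kᵀ + L Lᵀ = 1`. -/
lemma map_mulVec_add_mulVec_pi_gaussianReal {K L : Matrix ι ι ℝ} (hKL : K * Kᵀ + L * Lᵀ = 1) :
    ((Measure.pi fun _ : ι => gaussianReal 0 1).prod (Measure.pi fun _ : ι => gaussianReal 0 1)).map
        (fun p : (ι → ℝ) × (ι → ℝ) => K *ᵥ p.1 + L *ᵥ p.2)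
      = Measure.pi fun _ : ι => gaussianReal 0 1 := by
  set Kc := K.mulVecLin.toContinuousLinearMap
  set Lc := L.mulVecLin.toContinuousLinearMap
  have hφ : (fun p : (ι → ℝ) × (ι → ℝ) => K *ᵥ p.1 + L *ᵥ p.2) = ⇑(Kc.coprod Lc) := by
    ext p; simp [Kc, Lc]
  rw [hφ]
  have := Measure.isProbabilityMeasure_map (μ := (Measure.pi fun _ : ι => gaussianReal 0 1).prod
    (Measure.pi fun _ : ι => gaussianReal 0 1)) (Kc.coprod Lc).continuous.aemeasurable
  refine Measure.ext_of_charFunDual (funext fun l => ?_)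
  rw [charFunDual_map, charFunDual_prod, charFunDual_pi_gaussianReal, charFunDual_pi_gaussianReal,
    charFunDual_pi_gaussianReal, ← Complex.exp_add]
  set a : ι → ℝ := fun i => l (Pi.single i 1)
  have hl (x : ι → ℝ) : l x = a ⬝ᵥ x := by
    conv_lhs => rw [pi_eq_sum_univ' x]
    simp [a, dotProduct, mul_comm]
  have hsum (A : Matrix ι ι ℝ) :
      ∑ i, (l (A *ᵥ Pi.single i 1)) ^ 2 = a ⬝ᵥ ((A * Aᵀ) *ᵥ a) := by
    rw [← mulVec_mulVec, dotProduct_mulVec_eq_transpose_mulVec_dotProduct, dotProduct]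
    refine Finset.sum_congr rfl fun i _ => ?_
    rw [hl, dotProduct_mulVec_eq_transpose_mulVec_dotProduct, dotProduct_single, mul_one, sq]
  have key : ∑ i, (l (K *ᵥ Pi.single i 1)) ^ 2 + ∑ i, (l (L *ᵥ Pi.single i 1)) ^ 2
      = ∑ i, l (Pi.single i 1) ^ 2 := by
    rw [hsum, hsum, ← dotProduct_add, ← add_mulVec, hKL, one_mulVec]
    simp [dotProduct, a, sq]
  congr 1
  rw [← key]
  simp only [ContinuousLinearMap.comp_apply, ContinuousLinearMap.inl_apply,
    ContinuousLinearMap.inr_apply, ContinuousLinearMap.coprod_apply, map_zero, add_zero, zero_add]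
  push_cast
  simp only [Kc, Lc, LinearMap.coe_toContinuousLinearMap', mulVecLin_apply]
  ring

end GaussianMixing

section ConditionalExpectation

variable {Ω : Type*} {m mΩ : MeasurableSpace Ω} {μ : Measure Ω} [IsProbabilityMeasure μ]

/-- The conditional expectation minimizes the mean squared error. -/
lemma integral_sub_condExp_sq_le (hm : m ≤ mΩ) {f h : Ω → ℝ} (hf : MemLp f 2 μ) (hh : MemLp h 2 μ)
    (hhm : StronglyMeasurable[m] h) :
    ∫ ω, (f ω - (μ[f | m]) ω) ^ 2 ∂μ ≤ ∫ ω, (f ω - h ω) ^ 2 ∂μ := by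
  set e := μ[f | m] with he_def
  have he : MemLp e 2 μ := hf.condExp one_le_two
  have hfe : MemLp (f - e) 2 μ := hf.sub he
  have heh : MemLp (e - h) 2 μ := he.sub hh
  have hint : Integrable ((f - e) * (e - h)) μ := hfe.integrable_mul heh
  have hcond : μ[f - e | m] =ᵐ[μ] 0 := by
    refine (condExp_sub (hf.integrable one_le_two) (he.integrable one_le_two) m).trans ?_
    rw [he_def, condExp_of_stronglyMeasurable hm stronglyMeasurable_condExp integrable_condExp,
      sub_self]
  have hcross : ∫ ω, ((f - e) * (e - h)) ω ∂μ = 0 := by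
    rw [← integral_condExp hm]
    refine integral_eq_zero_of_ae ?_
    refine (condExp_mul_of_stronglyMeasurable_right (stronglyMeasurable_condExp.sub hhm) hint
      (hfe.integrable one_le_two)).trans ?_
    filter_upwards [hcond] with ω hω
    simp [hω]
  have hexp : ∀ ω, (f ω - h ω) ^ 2
      = (f - e) ω ^ 2 + 2 * ((f - e) * (e - h)) ω + (e - h) ω ^ 2 := by
    intro ω; simp only [Pi.sub_apply, Pi.mul_apply]; ring
  simp_rw [hexp]
  have hadd : Integrable (fun ω => (f - e) ω ^ 2 + 2 * ((f - e) * (e - h)) ω) μ :=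
    hfe.integrable_sq.add (hint.const_mul 2)
  rw [integral_add hadd heh.integrable_sq,
    integral_add hfe.integrable_sq (hint.const_mul 2), integral_const_mul, hcross, mul_zero,
    add_zero]
  exact le_add_of_nonneg_right (integral_nonneg fun ω => sq_nonneg _)

/-- If `Y₁` is, jointly with `X`, a degraded version of `Y₂` by an independent source `Z`, then
estimating `φ(X)` from `Y₂` has a smaller mean squared error than from `Y₁`. -/
lemma integral_sub_condExp_sq_le_of_degraded {E F₁ F₂ Z : Type*} [MeasurableSpace E]
    [MeasurableSpace F₁] [MeasurableSpace F₂] [MeasurableSpace Z] {ν : Measure Z}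
    [IsProbabilityMeasure ν] {X : Ω → E} {Y₁ : Ω → F₁} {Y₂ : Ω → F₂} {G : F₂ × Z → F₁} {φ : E → ℝ}
    (hX : Measurable X) (hY₁ : Measurable Y₁) (hY₂ : Measurable Y₂) (hG : Measurable G)
    (hφ : Measurable φ) (hφX : MemLp (fun ω => φ (X ω)) 2 μ)
    (hlaw : μ.map (fun ω => (X ω, Y₁ ω)) = (μ.prod ν).map (fun p => (X p.1, G (Y₂ p.1, p.2)))) :
    ∫ ω, (φ (X ω) - (μ[fun ω' => φ (X ω') | MeasurableSpace.comap Y₂ inferInstance]) ω) ^ 2 ∂μ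
      ≤ ∫ ω, (φ (X ω) - (μ[fun ω' => φ (X ω') | MeasurableSpace.comap Y₁ inferInstance]) ω) ^ 2
          ∂μ := by
  obtain ⟨g, hg, hgY⟩ := (stronglyMeasurable_condExp (μ := μ) (f := fun ω' => φ (X ω'))
    (m := MeasurableSpace.comap Y₁ inferInstance)).measurable.exists_eq_measurable_comp
  have hgL : MemLp (fun ω => φ (X ω) - g (Y₁ ω)) 2 μ := by
    have h := hφX.sub (hφX.condExp (m := MeasurableSpace.comap Y₁ inferInstance) one_le_two)
    rw [hgY] at h
    exact h
  rw [hgY]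
  simp only [Function.comp_apply]
  set q : E × F₁ → ℝ := fun p => (φ p.1 - g p.2) ^ 2 with hq_def
  have hq : Measurable q := by fun_prop
  have hpair₁ : Measurable fun ω => (X ω, Y₁ ω) := by fun_prop
  have hpair₂ : Measurable fun p : Ω × Z => (X p.1, G (Y₂ p.1, p.2)) := by fun_prop
  have hint₁ : Integrable q (μ.map fun ω => (X ω, Y₁ ω)) :=
    (integrable_map_measure hq.aestronglyMeasurable hpair₁.aemeasurable).2 hgL.integrable_sq
  have heq : ∫ ω, (φ (X ω) - g (Y₁ ω)) ^ 2 ∂μ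
      = ∫ p : Ω × Z, (φ (X p.1) - g (G (Y₂ p.1, p.2))) ^ 2 ∂(μ.prod ν) := by
    rw [← integral_map (f := q) hpair₁.aemeasurable hq.aestronglyMeasurable, hlaw,
      integral_map hpair₂.aemeasurable hq.aestronglyMeasurable]
  rw [hlaw] at hint₁
  have hint₂ : Integrable (fun p : Ω × Z => (φ (X p.1) - g (G (Y₂ p.1, p.2))) ^ 2) (μ.prod ν) :=
    (integrable_map_measure hq.aestronglyMeasurable hpair₂.aemeasurable).1 hint₁
  rw [heq, integral_prod_symm _ hint₂]
  set c := ∫ ω, (φ (X ω) - (μ[fun ω' => φ (X ω') | MeasurableSpace.comap Y₂ inferInstance]) ω) ^ 2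
    ∂μ
  have hc : c = ∫ _ : Z, c ∂ν := by simp
  rw [hc]
  refine integral_mono_ae (integrable_const c) hint₂.integral_prod_right ?_
  filter_upwards [hint₂.prod_left_ae] with z hz
  have hk : Measurable fun y => g (G (y, z)) := by fun_prop
  have hres : MemLp (fun ω => φ (X ω) - g (G (Y₂ ω, z))) 2 μ :=
    (memLp_two_iff_integrable_sq (by fun_prop)).2 hz
  have hkL : MemLp (fun ω => g (G (Y₂ ω, z))) 2 μ := by
    refine (hφX.sub hres).ae_eq (.of_forall fun ω => ?_)
    simp
  exact integral_sub_condExp_sq_le hY₂.comap_le hφX hkL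
    (hk.comp (comap_measurable Y₂)).stronglyMeasurable

/-- The quadratic form of an error covariance matrix is the mean squared error of the corresponding
linear functional. -/
lemma dotProduct_mulVec_eq_integral_sub_condExp_sq {ι : Type*} [Fintype ι] {X : Ω → ι → ℝ}
    (hX : ∀ i, MemLp (fun ω => X ω i) 2 μ) {M : Matrix ι ι ℝ}
    (hM : ∀ i j, M i j = ∫ ω, (X ω i - (μ[fun ω' => X ω' i | m]) ω)
      * (X ω j - (μ[fun ω' => X ω' j | m]) ω) ∂μ) (v : ι → ℝ) :
    v ⬝ᵥ (M *ᵥ v) = ∫ ω, (v ⬝ᵥ X ω - (μ[fun ω' => v ⬝ᵥ X ω' | m]) ω) ^ 2 ∂μ := by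
  have hres (i : ι) : MemLp (fun ω => X ω i - (μ[fun ω' => X ω' i | m]) ω) 2 μ :=
    (hX i).sub ((hX i).condExp one_le_two)
  have hlin : μ[fun ω' => v ⬝ᵥ X ω' | m] =ᵐ[μ]
      fun ω => ∑ i, v i * (μ[fun ω' => X ω' i | m]) ω := by
    have h1 : (fun ω' => v ⬝ᵥ X ω') = ∑ i, v i • fun ω' => X ω' i := by
      ext ω; simp [dotProduct]
    rw [h1]
    refine (condExp_finsetSum (fun i _ => ((hX i).integrable one_le_two).smul (v i)) m).trans ?_
    have h2 : ∀ᵐ ω ∂μ, ∀ i, (μ[v i • fun ω' => X ω' i | m]) ω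
        = (v i • μ[fun ω' => X ω' i | m]) ω :=
      ae_all_iff.2 fun i => condExp_smul (v i) _ m
    filter_upwards [h2] with ω hω
    simp [hω]
  have hsq : ∫ ω, (v ⬝ᵥ X ω - (μ[fun ω' => v ⬝ᵥ X ω' | m]) ω) ^ 2 ∂μ
      = ∫ ω, ∑ i, ∑ j, v i * v j * ((X ω i - (μ[fun ω' => X ω' i | m]) ω)
        * (X ω j - (μ[fun ω' => X ω' j | m]) ω)) ∂μ := by
    refine integral_congr_ae ?_
    filter_upwards [hlin] with ω hω
    rw [hω, dotProduct, ← Finset.sum_sub_distrib, sq, Finset.sum_mul_sum]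
    exact Finset.sum_congr rfl fun i _ => Finset.sum_congr rfl fun j _ => by ring
  have hint (i j : ι) : Integrable (fun ω => v i * v j * ((X ω i - (μ[fun ω' => X ω' i | m]) ω)
        * (X ω j - (μ[fun ω' => X ω' j | m]) ω))) μ :=
    ((hres i).integrable_mul (hres j)).const_mul _
  rw [hsq, integral_finsetSum _ fun i _ => integrable_finsetSum _ fun j _ => hint i j]
  simp_rw [integral_finsetSum _ fun j _ => hint _ j, integral_const_mul, ← hM]
  simp only [dotProduct, mulVec, Finset.mul_sum]
  exact Finset.sum_congr rfl fun i _ => Finset.sum_congr rfl fun j _ => by ring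

end ConditionalExpectation

/-- The Gaussian channel with gain `s₁ = K s₂`, `K Kᵀ ⪯ 1`, is a degradation of the one with gain
`s₂`. -/
lemma map_prodMk_gaussian_channel_eq {Ω ι : Type*} [Fintype ι] [DecidableEq ι] [MeasurableSpace Ω]
    {μ : Measure Ω} [IsProbabilityMeasure μ] {X W : Ω → ι → ℝ} (hX : Measurable X)
    (hW : Measurable W) (hindep : IndepFun X W μ)
    (hWlaw : μ.map W = Measure.pi fun _ : ι => gaussianReal 0 1) {s₁ s₂ K L : Matrix ι ι ℝ}
    (hs : K * s₂ = s₁) (hKL : K * Kᵀ + L * Lᵀ = 1) :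
    μ.map (fun ω => (X ω, s₁ *ᵥ X ω + W ω))
      = (μ.prod (Measure.pi fun _ : ι => gaussianReal 0 1)).map
          (fun p => (X p.1, K *ᵥ (s₂ *ᵥ X p.1 + W p.1) + L *ᵥ p.2)) := by
  have hmv (A : Matrix ι ι ℝ) : Measurable fun x : ι → ℝ => A *ᵥ x :=
    A.mulVecLin.toContinuousLinearMap.continuous.measurable
  have hXlaw := Measure.isProbabilityMeasure_map (μ := μ) hX.aemeasurable
  set γ : Measure (ι → ℝ) := Measure.pi fun _ : ι => gaussianReal 0 1
  have hXW : μ.map (fun ω => (X ω, W ω)) = (μ.map X).prod γ := by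
    rw [hindep.map_prod_eq_prod_map_map hX.aemeasurable hW.aemeasurable, hWlaw]
  have hH : Measurable fun p : (ι → ℝ) × (ι → ℝ) => (p.1, s₁ *ᵥ p.1 + p.2) := by
    have := hmv s₁; fun_prop
  have hmix : Measurable fun p : (ι → ℝ) × (ι → ℝ) => K *ᵥ p.1 + L *ᵥ p.2 := by
    have := hmv K; have := hmv L; fun_prop
  have hleft : μ.map (fun ω => (X ω, s₁ *ᵥ X ω + W ω))
      = ((μ.map X).prod γ).map (fun p => (p.1, s₁ *ᵥ p.1 + p.2)) := by
    rw [← hXW, Measure.map_map hH (by fun_prop)]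
    rfl
  have hγ : (μ.map X).prod γ
      = (μ.prod γ).map (fun p => (X p.1, K *ᵥ W p.1 + L *ᵥ p.2)) := by
    have hmixlaw : (γ.prod γ).map (fun p => K *ᵥ p.1 + L *ᵥ p.2) = γ :=
      map_mulVec_add_mulVec_pi_gaussianReal hKL
    conv_lhs => rw [← hmixlaw, ← Measure.map_id (μ := μ.map X)]
    rw [Measure.map_prod_map _ _ measurable_id hmix, ← Measure.prodAssoc_prod, ← hXW]
    conv_lhs => rw [← Measure.map_id (μ := γ)]
    rw [Measure.map_prod_map _ _ (by fun_prop) measurable_id,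
      Measure.map_map (by fun_prop) (by fun_prop), Measure.map_map (by fun_prop) (by fun_prop)]
    rfl
  have hpair : Measurable fun p : Ω × (ι → ℝ) => (X p.1, K *ᵥ W p.1 + L *ᵥ p.2) := by
    have := hmv K; have := hmv L; fun_prop
  rw [hleft, hγ, Measure.map_map hH hpair]
  congr 1
  ext1 p
  simp only [Function.comp_apply, mulVec_add, mulVec_mulVec, hs, add_assoc]

/-- the MMSE matrix `M(λ) = E[cov(X | λ^{1/2} X + W)]` of a bounded signal
`X` observed through Gaussian noise `W ~ N(0, I_d)` is nonincreasing in the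
signal-to-noise matrix `λ` w.r.t. the Loewner order: `λ₁ ⪯ λ₂` implies `M(λ₂) ⪯ M(λ₁)`.
The PSD square roots `s₁, s₂` of `λ₁, λ₂` are given as hypotheses, and the MMSE matrices
are specified entrywise via conditional expectations given `σ(Y)`. -/
theorem stmt_8 {Ω : Type*} [MeasurableSpace Ω] (μ : Measure Ω) [IsProbabilityMeasure μ]
    (d : ℕ) (X W : Ω → (Fin d → ℝ)) (hX : Measurable X) (hW : Measurable W)
    (hXbdd : ∃ C : ℝ, ∀ ω, ‖X ω‖ ≤ C)
    (hindep : IndepFun X W μ)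
    (hWlaw : Measure.map W μ = Measure.pi fun _ : Fin d => gaussianReal 0 1)
    (lam₁ lam₂ : Matrix (Fin d) (Fin d) ℝ)
    (hlam₁ : lam₁.PosSemidef) (hlam₂ : lam₂.PosSemidef)
    (hle : (lam₂ - lam₁).PosSemidef)
    (s₁ s₂ : Matrix (Fin d) (Fin d) ℝ)
    (hs₁ : s₁.PosSemidef) (hs₁sq : s₁ * s₁ = lam₁)
    (hs₂ : s₂.PosSemidef) (hs₂sq : s₂ * s₂ = lam₂)
    (M₁ M₂ : Matrix (Fin d) (Fin d) ℝ)
    (hM₁ : ∀ i j, M₁ i j =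
      ∫ ω, (X ω i - (μ[fun ω' => X ω' i |
            MeasurableSpace.comap (fun ω' => s₁.mulVec (X ω') + W ω') inferInstance]) ω)
        * (X ω j - (μ[fun ω' => X ω' j |
            MeasurableSpace.comap (fun ω' => s₁.mulVec (X ω') + W ω') inferInstance]) ω) ∂μ)
    (hM₂ : ∀ i j, M₂ i j =
      ∫ ω, (X ω i - (μ[fun ω' => X ω' i |
            MeasurableSpace.comap (fun ω' => s₂.mulVec (X ω') + W ω') inferInstance]) ω)
        * (X ω j - (μ[fun ω' => X ω' j |
            MeasurableSpace.comap (fun ω' => s₂.mulVec (X ω') + W ω') inferInstance]) ω) ∂μ) :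
    (M₁ - M₂).PosSemidef := by
  obtain ⟨C, hC⟩ := hXbdd
  have hXL (i : Fin d) : MemLp (fun ω => X ω i) 2 μ :=
    .of_bound (by fun_prop) C (.of_forall fun ω => (norm_le_pi_norm (X ω) i).trans (hC ω))
  have hmv (A : Matrix (Fin d) (Fin d) ℝ) : Measurable fun x : Fin d → ℝ => A *ᵥ x :=
    A.mulVecLin.toContinuousLinearMap.continuous.measurable
  have hY (A : Matrix (Fin d) (Fin d) ℝ) : Measurable fun ω => A *ᵥ X ω + W ω :=
    ((hmv A).comp hX).add hW
  subst hs₁sq hs₂sq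
  obtain ⟨K, L, hKs, hKL⟩ := exists_contraction_mul_eq hs₁.1 hs₂.1 hle
  refine .of_dotProduct_mulVec_nonneg ?_ fun v => ?_
  · refine IsHermitian.ext fun i j => ?_
    rw [star_trivial, Matrix.sub_apply, Matrix.sub_apply, hM₁, hM₁, hM₂, hM₂]
    simp only [mul_comm]
  · rw [star_trivial, sub_mulVec, dotProduct_sub, sub_nonneg,
      dotProduct_mulVec_eq_integral_sub_condExp_sq hXL hM₁,
      dotProduct_mulVec_eq_integral_sub_condExp_sq hXL hM₂]
    have hφ : Measurable fun x : Fin d → ℝ => v ⬝ᵥ x := by unfold dotProduct; fun_prop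
    have hG : Measurable fun p : (Fin d → ℝ) × (Fin d → ℝ) => K *ᵥ p.1 + L *ᵥ p.2 :=
      ((hmv K).comp measurable_fst).add ((hmv L).comp measurable_snd)
    exact integral_sub_condExp_sq_le_of_degraded hX (hY s₁) (hY s₂) hG hφ
      (memLp_finsetSum _ fun i _ => (hXL i).const_mul (v i))
      (map_prodMk_gaussian_channel_eq hX hW hindep hWlaw hKs hKL)
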